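/- arXiv:2102.05342 — 5 statements merged into one kernel-verified Lean document; each statement's English description precedes it below -/
import Mathlib

section
/- Let p > 2 and c > 0, and let f : ℝ² → ℝ be convex and differentiable with f(0,0) = 0 and f(x) ≥ c‖x‖^p for all x ∈ ℝ². Let T ∈ (0, +∞], let γ : [0, T) → ℝ² be differentiable with γ'(s) = ∇f(γ(s)) for all s ∈ [0, T), and suppose γ(0) ≠ (0,0). Then T ≤ ‖γ(0)‖^{2−p} / (c(p−2)); in particular every such solution blows up in finite time. -/
open Real

/-!
Along the flow, `u = ‖γ‖²` satisfies `u' = 2⟪γ, ∇f(γ)⟫ ≥ 2 f(γ) ≥ 2 c u ^ (p / 2)`, where the first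
inequality is the convexity inequality at `γ` against the origin (`le_inner_gradient`) and uses
`f 0 = 0`. Hence `u` is nondecreasing, so it stays positive, and `u ^ ((2 - p) / 2) + c (p - 2) s`
is nonincreasing in `s`. Since `u ^ ((2 - p) / 2)` is positive, `c (p - 2) s < ‖γ 0‖ ^ (2 - p)`
for every time `s` at which the solution exists.
-/

/-- The first-order convexity inequality `f 0 ≥ f x + ⟪∇f x, 0 - x⟫`, obtained by restricting `f`
to the line through `0` and `x`. -/
lemma le_inner_gradient {E : Type*} [NormedAddCommGroup E] [InnerProductSpace ℝ E]
    [CompleteSpace E] {f : E → ℝ} (hconv : ConvexOn ℝ Set.univ f)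
    (hdiff : Differentiable ℝ f) (hf0 : f 0 = 0) (x : E) :
    f x ≤ inner ℝ x (gradient f x) := by
  have hφ : ConvexOn ℝ Set.univ (fun t : ℝ => f (t • x)) := by
    simpa [Function.comp_def] using hconv.comp_linearMap (LinearMap.toSpanSingleton ℝ E x)
  have hd : HasDerivAt (fun t : ℝ => f (t • x)) (inner ℝ x (gradient f x)) 1 := by
    have h1 : HasDerivAt (fun t : ℝ => t • x) x 1 := by
      simpa using (hasDerivAt_id (1 : ℝ)).smul_const x
    have h2 : HasFDerivAt f (InnerProductSpace.toDual ℝ E (gradient f x)) ((1 : ℝ) • x) := by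
      rw [one_smul]
      exact (hdiff x).hasGradientAt.hasFDerivAt
    have h3 := h2.comp_hasDerivAt (1 : ℝ) h1
    rw [InnerProductSpace.toDual_apply_apply, real_inner_comm] at h3
    exact h3
  have h := hφ.slope_le_of_hasDerivAt (Set.mem_univ 0) (Set.mem_univ 1) one_pos hd
  simpa [slope_def_field, hf0] using h

theorem gradient_orbit_finite_time_blowup (p c : ℝ) (hp : 2 < p) (hc : 0 < c)
    (f : EuclideanSpace ℝ (Fin 2) → ℝ)
    (hconv : ConvexOn ℝ Set.univ f)
    (hdiff : Differentiable ℝ f)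
    (hf0 : f 0 = 0)
    (hgrow : ∀ x : EuclideanSpace ℝ (Fin 2), c * ‖x‖ ^ p ≤ f x)
    (T : EReal) (hT : 0 < T)
    (γ : ℝ → EuclideanSpace ℝ (Fin 2))
    (hγ : ∀ s : ℝ, 0 ≤ s → (s : EReal) < T → HasDerivAt γ (gradient f (γ s)) s)
    (hγ0 : γ 0 ≠ 0) :
    T ≤ ((‖γ 0‖ ^ (2 - p) / (c * (p - 2)) : ℝ) : EReal) := by
  by_contra! hlt
  set S : ℝ := ‖γ 0‖ ^ (2 - p) / (c * (p - 2)) with hS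
  have hn0 : 0 < ‖γ 0‖ := norm_pos_iff.mpr hγ0
  have hp2 : 0 < p - 2 := by linarith
  have hS0 : 0 ≤ S := by positivity
  have hsq (s : ℝ) (q : ℝ) : (‖γ s‖ ^ 2) ^ (q / 2) = ‖γ s‖ ^ q := by
    rw [← rpow_natCast, ← rpow_mul (norm_nonneg _)]
    congr 1
    push_cast
    ring
  have hu (s : ℝ) (hs : s ∈ Set.Icc 0 S) :
      HasDerivAt (fun t => ‖γ t‖ ^ 2) (2 * inner ℝ (γ s) (gradient f (γ s))) s :=
    (hγ s hs.1 ((EReal.coe_le_coe_iff.mpr hs.2).trans_lt hlt)).norm_sq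
  have hge (s : ℝ) : c * ‖γ s‖ ^ p ≤ inner ℝ (γ s) (gradient f (γ s)) :=
    (hgrow _).trans (le_inner_gradient hconv hdiff hf0 _)
  have hmono : MonotoneOn (fun t => ‖γ t‖ ^ 2) (Set.Icc 0 S) := by
    refine monotoneOn_of_hasDerivWithinAt_nonneg (convex_Icc 0 S)
      (fun s hs => (hu s hs).continuousAt.continuousWithinAt)
      (fun s hs => (hu s (interior_subset hs)).hasDerivWithinAt) fun s _ => ?_
    have h1 : 0 ≤ c * ‖γ s‖ ^ p := by positivity
    linarith [hge s]
  have hpos (s : ℝ) (hs : s ∈ Set.Icc 0 S) : 0 < ‖γ s‖ ^ 2 :=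
    lt_of_lt_of_le (by positivity) (hmono (Set.left_mem_Icc.mpr hS0) hs hs.1)
  have hw (s : ℝ) (hs : s ∈ Set.Icc 0 S) :
      HasDerivAt (fun t => (‖γ t‖ ^ 2) ^ ((2 - p) / 2) + c * (p - 2) * t)
        (2 * inner ℝ (γ s) (gradient f (γ s)) * ((2 - p) / 2) *
          (‖γ s‖ ^ 2) ^ ((2 - p) / 2 - 1) + c * (p - 2)) s := by
    have h1 := (hu s hs).rpow_const (p := (2 - p) / 2) (Or.inl (hpos s hs).ne')
    have h2 : HasDerivAt (fun t : ℝ => c * (p - 2) * t) (c * (p - 2)) s := by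
      simpa using (hasDerivAt_id s).const_mul (c * (p - 2))
    exact h1.add h2
  have hanti : AntitoneOn (fun t => (‖γ t‖ ^ 2) ^ ((2 - p) / 2) + c * (p - 2) * t)
      (Set.Icc 0 S) := by
    refine antitoneOn_of_hasDerivWithinAt_nonpos (convex_Icc 0 S)
      (fun s hs => (hw s hs).continuousAt.continuousWithinAt)
      (fun s hs => (hw s (interior_subset hs)).hasDerivWithinAt) fun s hs => ?_
    have hns : 0 < ‖γ s‖ := by
      refine lt_of_pow_lt_pow_left₀ 2 (norm_nonneg _) ?_
      simpa using hpos s (interior_subset hs)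
    have he : (‖γ s‖ ^ 2) ^ ((2 - p) / 2 - 1) = ‖γ s‖ ^ (-p) := by
      rw [← hsq]
      congr 1
      ring
    have hcancel : ‖γ s‖ ^ p * ‖γ s‖ ^ (-p) = 1 := by
      rw [← rpow_add hns, add_neg_cancel, rpow_zero]
    have hc' : c ≤ inner ℝ (γ s) (gradient f (γ s)) * ‖γ s‖ ^ (-p) := by
      have := mul_le_mul_of_nonneg_right (hge s) (rpow_nonneg hns.le (-p))
      rwa [mul_assoc, hcancel, mul_one] at this
    rw [he]
    have := mul_le_mul_of_nonneg_left hc' hp2.le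
    linarith
  have hfin := hanti (Set.left_mem_Icc.mpr hS0) (Set.right_mem_Icc.mpr hS0) hS0
  have hposS : 0 < (‖γ S‖ ^ 2) ^ ((2 - p) / 2) :=
    rpow_pos_of_pos (hpos S (Set.right_mem_Icc.mpr hS0)) _
  have hSmul : c * (p - 2) * S = ‖γ 0‖ ^ (2 - p) := by
    rw [hS]
    field_simp
  simp only [hSmul, hsq 0, mul_zero, add_zero] at hfin
  linarith
end

section
/- Write M(t,θ) = (X(t,θ), Y(t,θ)). Then for every (t, θ) ∈ ℝ², the Jacobian determinant (∂X/∂t)(∂Y/∂θ) − (∂Y/∂t)(∂X/∂θ) at (t, θ) equals e^{2t}(√2 + cos θ sin θ); in particular it lies between e^{2t}(√2 − 1/2) and e^{2t}(√2 + 1/2), and is strictly positive. -/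
/-!
The radial factor `e^t` and the rotation by `t` give `∂X/∂t = X - Y` and `∂Y/∂t = X + Y`, so the
Jacobian is `(X Y_θ - Y X_θ) - (X X_θ + Y Y_θ)`. The first bracket is `√2 e^{2t}`; the second is
half the `θ`-derivative of `X² + Y² = e^{2t} (2 cos² θ + sin² θ)`, that is `-e^{2t} cos θ sin θ`.
The bounds follow from `|cos θ sin θ| ≤ 1/2` and `√2 > 1/2`.
-/

open Real

theorem concrete_jacobian_formula
    (X Y : ℝ → ℝ → ℝ)
    (hX : ∀ t θ, X t θ =
      Real.exp t * (Real.sqrt 2 * Real.cos t * Real.cos θ - Real.sin t * Real.sin θ))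
    (hY : ∀ t θ, Y t θ =
      Real.exp t * (Real.sqrt 2 * Real.sin t * Real.cos θ + Real.cos t * Real.sin θ)) :
    ∀ t θ : ℝ,
      deriv (fun u => X u θ) t * deriv (fun v => Y t v) θ
          - deriv (fun u => Y u θ) t * deriv (fun v => X t v) θ
        = Real.exp (2 * t) * (Real.sqrt 2 + Real.cos θ * Real.sin θ) ∧
      Real.exp (2 * t) * (Real.sqrt 2 - 1 / 2)
        ≤ Real.exp (2 * t) * (Real.sqrt 2 + Real.cos θ * Real.sin θ) ∧
      Real.exp (2 * t) * (Real.sqrt 2 + Real.cos θ * Real.sin θ)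
        ≤ Real.exp (2 * t) * (Real.sqrt 2 + 1 / 2) ∧
      0 < Real.exp (2 * t) * (Real.sqrt 2 + Real.cos θ * Real.sin θ) := by
  intro t θ
  have hXt : HasDerivAt (fun u => X u θ) (X t θ - Y t θ) t := by
    simp only [hX, hY]
    refine ((Real.hasDerivAt_exp t).mul
      ((((Real.hasDerivAt_cos t).const_mul (√2)).mul_const (Real.cos θ)).sub
        ((Real.hasDerivAt_sin t).mul_const (Real.sin θ)))).congr_deriv ?_
    simp only [Pi.sub_apply]
    ring
  have hYt : HasDerivAt (fun u => Y u θ) (X t θ + Y t θ) t := by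
    simp only [hX, hY]
    refine ((Real.hasDerivAt_exp t).mul
      ((((Real.hasDerivAt_sin t).const_mul (√2)).mul_const (Real.cos θ)).add
        ((Real.hasDerivAt_cos t).mul_const (Real.sin θ)))).congr_deriv ?_
    simp only [Pi.add_apply]
    ring
  have hXθ : HasDerivAt (fun v => X t v)
      (Real.exp t * (√2 * Real.cos t * -Real.sin θ - Real.sin t * Real.cos θ)) θ := by
    simp only [hX]
    exact (((Real.hasDerivAt_cos θ).const_mul _).sub
      ((Real.hasDerivAt_sin θ).const_mul _)).const_mul _
  have hYθ : HasDerivAt (fun v => Y t v)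
      (Real.exp t * (√2 * Real.sin t * -Real.sin θ + Real.cos t * Real.cos θ)) θ := by
    simp only [hY]
    exact (((Real.hasDerivAt_cos θ).const_mul _).add
      ((Real.hasDerivAt_sin θ).const_mul _)).const_mul _
  have hexp : Real.exp (2 * t) = Real.exp t ^ 2 := by
    rw [two_mul, Real.exp_add, sq]
  have hpos : 0 < Real.exp (2 * t) := Real.exp_pos _
  have hsq : √2 ^ 2 = (2 : ℝ) := Real.sq_sqrt (by norm_num)
  have hsqrt : (1 : ℝ) < √2 := Real.one_lt_sqrt_two
  have ht := Real.sin_sq_add_cos_sq t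
  have hθ := Real.sin_sq_add_cos_sq θ
  have hlower : -(1 / 2) ≤ Real.cos θ * Real.sin θ := by
    nlinarith [sq_nonneg (Real.cos θ + Real.sin θ)]
  have hupper : Real.cos θ * Real.sin θ ≤ 1 / 2 := by
    nlinarith [sq_nonneg (Real.cos θ - Real.sin θ)]
  refine ⟨?_, ?_, ?_, ?_⟩
  · rw [hXt.deriv, hYt.deriv, hXθ.deriv, hYθ.deriv, hX, hY, hexp]
    -- Before simplification the left side is
    -- `e^{2t} (sin² t + cos² t) (√2 (sin² θ + cos² θ) + (√2² - 1) cos θ sin θ)`.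
    linear_combination
      Real.exp t ^ 2 * (√2 * (Real.sin θ ^ 2 + Real.cos θ ^ 2)
        + (√2 ^ 2 - 1) * Real.cos θ * Real.sin θ) * ht
      + Real.exp t ^ 2 * √2 * hθ + Real.exp t ^ 2 * Real.cos θ * Real.sin θ * hsq
  · exact mul_le_mul_of_nonneg_left (by linarith) hpos.le
  · exact mul_le_mul_of_nonneg_left (by linarith) hpos.le
  · exact mul_pos hpos (by linarith)
end

section
/- Let t, θ : ℝ → ℝ be differentiable functions such that t'(s) > 0 for all s, t(s) → +∞ as s → +∞, t(s) → −∞ as s → −∞, and for all s ∈ ℝ: t'(s)(√2 − cos θ(s) sin θ(s)) + θ'(s)(1 + sin²θ(s)) = 0. Then θ'(s) < 0 for all s, θ(s) → +∞ as s → −∞, and θ(s) → −∞ as s → +∞. -/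
/-!
Since `√2 - cos θ sin θ ≥ 1/2` and `1 + sin² θ ≤ 2`, the relation gives `θ' ≤ -t'/4` everywhere,
which already forces `θ' < 0`. It also makes `θ + t/4` antitone, so `θ` is at most (for `s ≥ 0`),
respectively at least (for `s ≤ 0`), a constant minus `t/4`; the limits of `t` then give those of
`θ`.
-/

open Filter Real

theorem theta_monotone_and_divergent
    (tf θf : ℝ → ℝ)
    (htf : Differentiable ℝ tf) (hθf : Differentiable ℝ θf)
    (ht' : ∀ s, 0 < deriv tf s)
    (htTop : Tendsto tf atTop atTop) (htBot : Tendsto tf atBot atBot)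
    (hrel : ∀ s : ℝ, deriv tf s * (Real.sqrt 2 - Real.cos (θf s) * Real.sin (θf s))
        + deriv θf s * (1 + Real.sin (θf s) ^ 2) = 0) :
    (∀ s, deriv θf s < 0) ∧ Tendsto θf atBot atTop ∧ Tendsto θf atTop atBot := by
  have hθ' : ∀ s, deriv θf s ≤ -(deriv tf s / 4) := by
    intro s
    have h1 : 1 / 2 ≤ Real.sqrt 2 - Real.cos (θf s) * Real.sin (θf s) := by
      have h2 : (1 : ℝ) ≤ Real.sqrt 2 := Real.one_le_sqrt.mpr (by norm_num)
      nlinarith [sq_nonneg (Real.cos (θf s) - Real.sin (θf s)), Real.sin_sq_add_cos_sq (θf s)]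
    have h3 := Real.sin_sq_le_one (θf s)
    have h4 := mul_le_mul_of_nonneg_left h1 (ht' s).le
    have h5 := mul_le_mul_of_nonneg_left h3 (ht' s).le
    by_contra! hlt
    have h6 : 0 < (deriv θf s + deriv tf s / 4) * (1 + Real.sin (θf s) ^ 2) :=
      mul_pos (by linarith) (by positivity)
    linarith [hrel s]
  have hanti : Antitone fun s => θf s + tf s / 4 := by
    refine antitone_of_hasDerivAt_nonpos
      (fun s => (hθf s).hasDerivAt.add ((htf s).hasDerivAt.div_const 4)) fun s => ?_
    have := hθ' s
    simp only [Pi.zero_apply]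
    linarith
  refine ⟨fun s => by linarith [hθ' s, ht' s], ?_, ?_⟩
  · have hlim : Tendsto (fun s => (θf 0 + tf 0 / 4) - tf s / 4) atBot atTop :=
      tendsto_atTop_add_const_left _ _
        (tendsto_neg_atBot_atTop.comp (htBot.atBot_div_const (by norm_num)))
    refine tendsto_atTop_mono' _ ?_ hlim
    filter_upwards [eventually_le_atBot 0] with s hs
    have : θf 0 + tf 0 / 4 ≤ θf s + tf s / 4 := hanti hs
    linarith
  · have hlim : Tendsto (fun s => (θf 0 + tf 0 / 4) - tf s / 4) atTop atBot :=
      tendsto_atBot_add_const_left _ _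
        (tendsto_neg_atTop_atBot.comp (htTop.atTop_div_const (by norm_num)))
    refine tendsto_atBot_mono' _ ?_ hlim
    filter_upwards [eventually_ge_atTop 0] with s hs
    have : θf s + tf s / 4 ≤ θf 0 + tf 0 / 4 := hanti hs
    linarith
end

section
/- Define h : ℝ → ℝ by h(θ) = √2/(1 + cos²θ) − (1 + sin²θ)/(√2 − cos θ sin θ). Then the integral of h over [0, 2π] is strictly negative: ∫₀^{2π} h(θ) dθ < 0. -/
open Real

/-!
With `c = cos 2θ` and `s = sin 2θ` the integrand equals
`2√2 / (3 + c) - (3 - c) / (2√2 - s)`. Since `-1 ≤ c` and `s < 2√2`,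
* `1 / (3 + c) ≤ 1/3 - c/9 + c²/18` (geometric expansion, last denominator replaced by its
  minimum `2`), and
* `1 / (2√2 - s) ≥ √2/4 + s/8` (tangent line at `s = 0`), where `3 - c > 0`.

The resulting trigonometric polynomial majorant `rotationMajorant` has mean
`√2 (13/18 - 3/4) = -√2/36`, so its integral over `[0, 2π]` is `-√2 π / 18 < 0`.
-/

/-- The trigonometric polynomial that bounds the integrand from above. -/
noncomputable def rotationMajorant (θ : ℝ) : ℝ :=
  2 * √2 * (1 / 3 - cos (2 * θ) / 9 + cos (2 * θ) ^ 2 / 18)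
    - (3 - cos (2 * θ)) * (√2 / 4 + sin (2 * θ) / 8)

lemma sqrt_two_sub_cos_mul_sin_pos (θ : ℝ) : 0 < √2 - cos θ * sin θ := by
  have h1 : (1 : ℝ) < √2 := by
    rw [Real.lt_sqrt] <;> norm_num
  nlinarith [sq_nonneg (cos θ - sin θ), sin_sq_add_cos_sq θ]

lemma integrand_le_rotationMajorant (θ : ℝ) :
    √2 / (1 + cos θ ^ 2) - (1 + sin θ ^ 2) / (√2 - cos θ * sin θ) ≤ rotationMajorant θ := by
  have hw2 : √2 ^ 2 = 2 := Real.sq_sqrt (by norm_num)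
  have hw : 0 < √2 := by positivity
  have hpos := sqrt_two_sub_cos_mul_sin_pos θ
  have hc : cos θ ^ 2 = (1 + cos (2 * θ)) / 2 := by rw [cos_two_mul]; ring
  have hs : sin θ ^ 2 = (1 - cos (2 * θ)) / 2 := by
    rw [cos_two_mul]; linarith [sin_sq_add_cos_sq θ]
  have hcs : cos θ * sin θ = sin (2 * θ) / 2 := by rw [sin_two_mul]; ring
  rw [hcs] at hpos
  rw [hc, hs, hcs, rotationMajorant]
  have hC1 := neg_one_le_cos (2 * θ)
  have hC2 := cos_le_one (2 * θ)
  generalize cos (2 * θ) = c at *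
  generalize sin (2 * θ) = s at *
  apply sub_le_sub
  · rw [div_le_iff₀ (by linarith)]
    have key : 1 ≤ 2 * (1 / 3 - c / 9 + c ^ 2 / 18) * (1 + (1 + c) / 2) := by
      nlinarith [mul_nonneg (sq_nonneg c) (by linarith : 0 ≤ 1 + c)]
    nlinarith [mul_le_mul_of_nonneg_left key hw.le]
  · rw [le_div_iff₀ hpos]
    have key : (√2 / 4 + s / 8) * (√2 - s / 2) ≤ 1 / 2 := by
      nlinarith [sq_nonneg s]
    nlinarith [mul_le_mul_of_nonneg_left key (by linarith : 0 ≤ 3 - c)]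

lemma continuous_rotationMajorant : Continuous rotationMajorant := by
  unfold rotationMajorant
  fun_prop

lemma integral_rotationMajorant :
    ∫ θ in (0 : ℝ)..(2 * π), rotationMajorant θ = -(√2 * π / 18) := by
  have hd : ∀ θ ∈ Set.uIcc 0 (2 * π), HasDerivAt
      (fun θ : ℝ => -(√2 / 36) * θ + √2 / 72 * sin (2 * θ)
        + √2 / 36 * (sin (2 * θ) * cos (2 * θ)) + 3 / 16 * cos (2 * θ)
        + 1 / 32 * sin (2 * θ) ^ 2) (rotationMajorant θ) θ := by
    intro θ _
    have h2 : HasDerivAt (fun θ : ℝ => 2 * θ) 2 θ := by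
      simpa using (hasDerivAt_id θ).const_mul 2
    have hS := h2.sin
    have hC := h2.cos
    refine HasDerivAt.congr_deriv ((((((hasDerivAt_id θ).const_mul (-(√2 / 36))).add (hS.const_mul (√2 / 72))).add
      ((hS.mul hC).const_mul (√2 / 36))).add (hC.const_mul (3 / 16))).add
      ((hS.pow 2).const_mul (1 / 32))) ?_
    have hs : sin (2 * θ) ^ 2 = 1 - cos (2 * θ) ^ 2 := by
      linarith [sin_sq_add_cos_sq (2 * θ)]
    simp only [rotationMajorant]
    push_cast
    linear_combination (-√2 / 18) * hs
  rw [intervalIntegral.integral_eq_sub_of_hasDerivAt hd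
    (continuous_rotationMajorant.intervalIntegrable _ _)]
  have e1 : sin (2 * (2 * π)) = 0 := by
    simpa using sin_nat_mul_pi 4 ▸ congrArg sin (by push_cast; ring : 2 * (2 * π) = (4 : ℕ) * π)
  have e2 : cos (2 * (2 * π)) = 1 := by
    simpa using cos_nat_mul_two_pi 2
  simp only [e1, e2, mul_zero, sin_zero, cos_zero]
  ring

theorem mean_rotation_negative :
    ∫ θ in (0:ℝ)..(2 * Real.pi),
      (Real.sqrt 2 / (1 + Real.cos θ ^ 2)
        - (1 + Real.sin θ ^ 2) / (Real.sqrt 2 - Real.cos θ * Real.sin θ)) < 0 := by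
  have hcont : Continuous fun θ : ℝ => √2 / (1 + cos θ ^ 2)
      - (1 + sin θ ^ 2) / (√2 - cos θ * sin θ) := by
    refine (Continuous.div (by fun_prop) (by fun_prop) fun θ => by positivity).sub
      (Continuous.div (by fun_prop) (by fun_prop) fun θ =>
        (sqrt_two_sub_cos_mul_sin_pos θ).ne')
  have hle := intervalIntegral.integral_mono (μ := MeasureTheory.volume)
    (by positivity : (0 : ℝ) ≤ 2 * π)
    (hcont.intervalIntegrable _ _) (continuous_rotationMajorant.intervalIntegrable _ _)
    integrand_le_rotationMajorant
  rw [integral_rotationMajorant] at hle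
  have : 0 < √2 * π / 18 := by positivity
  linarith
end

section
/- Let t, θ : ℝ → ℝ be differentiable functions such that t'(s) > 0 for all s, t(s) → ±∞ as s → ±∞, and for all s: t'(s)(√2 − cos θ(s) sin θ(s)) + θ'(s)(1 + sin²θ(s)) = 0. Let α : ℝ → ℝ be a differentiable function such that for all s ∈ ℝ, cos α(s) = X(t(s),θ(s))/‖M(t(s),θ(s))‖ and sin α(s) = Y(t(s),θ(s))/‖M(t(s),θ(s))‖, where M = (X, Y). Then α(s) → −∞ as s → −∞ and α(s) → +∞ as s → +∞; i.e., the curve s ↦ M(t(s), θ(s)) spirals infinitely many times around the origin as s → −∞ and at infinity as s → +∞. -/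
open Filter Real

/-!
Up to the positive factor `e^t`, the secant `M(t, θ)` is the rotation by `t` of
`(√2 cos θ, sin θ)`, and the latter vector always makes an acute angle with `(cos θ, sin θ)`.
Hence `cos (α - t - θ) > 0` along the curve, so by continuity `α - t - θ` stays within `π` of its
initial value (`abs_sub_lt_pi_of_cos_pos`), and it suffices to show `t + θ → ±∞`.

The relation gives `dθ/dt = -(√2 - cos θ sin θ) / (1 + sin² θ)`, and `t + θ` is not monotone; it
only grows on average over a period of `θ`. This is made quantitative by adding the bounded
periodic corrector `G(θ) = -(√2/8)(cos 2θ + sin 2θ)`: the inequality `corrector_ineq` says exactly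
that `t + θ + G(θ) - t/50` is nondecreasing along the curve. Therefore `t + θ` is at least
`t/50 - C` for `s ≥ 0` and at most `t/50 + C` for `s ≤ 0`.
-/

/-- A continuous function whose cosine is positive everywhere is confined to one of the intervals
of length `π` on which the cosine is positive. -/
lemma abs_sub_lt_pi_of_cos_pos {f : ℝ → ℝ} (hf : Continuous f) (hpos : ∀ s, 0 < cos (f s))
    (s₀ s : ℝ) : |f s - f s₀| < π := by
  -- Values at distance exactly `π` from `f s₀` are never taken, as the cosine is negative there.
  rw [abs_lt]
  constructor
  · by_contra! h
    obtain ⟨x, hx⟩ := mem_range_of_exists_le_of_exists_ge (c := f s₀ - π) hf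
      ⟨s, by linarith⟩ ⟨s₀, by linarith [pi_pos]⟩
    have h1 := hpos x
    rw [hx, cos_sub_pi] at h1
    linarith [hpos s₀]
  · by_contra! h
    obtain ⟨x, hx⟩ := mem_range_of_exists_le_of_exists_ge (c := f s₀ + π) hf
      ⟨s₀, by linarith [pi_pos]⟩ ⟨s, by linarith⟩
    have h1 := hpos x
    rw [hx, cos_add_pi] at h1
    linarith [hpos s₀]

/-- With `c = cos θ`, `d = sin θ`: the first factor is `1 + G'(θ)` for the corrector
`G(θ) = -(√2/8)(cos 2θ + sin 2θ)`. The coefficients of `G` cancel the first-order terms in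
`cos 2θ` and `sin 2θ` when everything is expanded. -/
lemma corrector_ineq (c d : ℝ) (h : c ^ 2 + d ^ 2 = 1) :
    (1 + √2 / 4 * (2 * d * c - (c ^ 2 - d ^ 2))) * (√2 - c * d) ≤ 49 / 50 * (1 + d ^ 2) := by
  have hr : √2 ^ 2 = 2 := sq_sqrt (by norm_num)
  have hr0 : 0 ≤ √2 := sqrt_nonneg 2
  have hr2 : √2 ≤ 1.4143 := by
    rw [sqrt_le_left (by norm_num)]; norm_num
  obtain ⟨p, hp⟩ : ∃ p, p = 2 * d * c := ⟨_, rfl⟩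
  obtain ⟨q, hq⟩ : ∃ q, q = c ^ 2 - d ^ 2 := ⟨_, rfl⟩
  have hpq : p ^ 2 + q ^ 2 = 1 := by
    rw [hp, hq]; linear_combination (c ^ 2 + d ^ 2 + 1) * h
  have hd : d ^ 2 = (1 - q) / 2 := by rw [hq]; linarith
  have hcd : c * d = p / 2 := by rw [hp]; ring
  rw [← hp, ← hq, hd, hcd]
  have hq1 : -1 ≤ q := by nlinarith [sq_nonneg p]
  -- The exact minimum of `p² - pq` on the unit circle is `(1 - √2)/2 > -0.208`.
  have hmin : -0.208 ≤ p ^ 2 - p * q := by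
    nlinarith [sq_nonneg (p - q * (1 / 2.416)), sq_nonneg q]
  have hmul : √2 * -0.208 ≤ √2 * (p ^ 2 - p * q) := mul_le_mul_of_nonneg_left hmin hr0
  have hexp : (1 + √2 / 4 * (p - q)) * (√2 - p / 2)
      = √2 - q / 2 - √2 / 8 * (p ^ 2 - p * q) := by
    linear_combination (p - q) / 4 * hr
  rw [hexp]
  linarith

theorem orbit_spirals
    (tf θf : ℝ → ℝ)
    (htf : Differentiable ℝ tf) (hθf : Differentiable ℝ θf)
    (ht' : ∀ s, 0 < deriv tf s)
    (htTop : Tendsto tf atTop atTop) (htBot : Tendsto tf atBot atBot)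
    (hrel : ∀ s : ℝ, deriv tf s * (Real.sqrt 2 - Real.cos (θf s) * Real.sin (θf s))
        + deriv θf s * (1 + Real.sin (θf s) ^ 2) = 0)
    (X Y : ℝ → ℝ → ℝ)
    (hX : ∀ t θ, X t θ =
      Real.exp t * (Real.sqrt 2 * Real.cos t * Real.cos θ - Real.sin t * Real.sin θ))
    (hY : ∀ t θ, Y t θ =
      Real.exp t * (Real.sqrt 2 * Real.sin t * Real.cos θ + Real.cos t * Real.sin θ))
    (α : ℝ → ℝ) (hα : Differentiable ℝ α)
    (hcos : ∀ s, Real.cos (α s)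
      = X (tf s) (θf s) / Real.sqrt (X (tf s) (θf s) ^ 2 + Y (tf s) (θf s) ^ 2))
    (hsin : ∀ s, Real.sin (α s)
      = Y (tf s) (θf s) / Real.sqrt (X (tf s) (θf s) ^ 2 + Y (tf s) (θf s) ^ 2)) :
    Tendsto α atBot atBot ∧ Tendsto α atTop atTop := by
  -- `α - t - θ` has positive cosine, hence bounded oscillation.
  have hcospos : ∀ s, 0 < cos (α s - tf s - θf s) := by
    intro s
    set a := tf s
    set b := θf s
    have hr : √2 ^ 2 = 2 := sq_sqrt (by norm_num)
    have hr0 : 0 < √2 := sqrt_pos.mpr (by norm_num)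
    have ha := sin_sq_add_cos_sq a
    have hb := sin_sq_add_cos_sq b
    have hnorm : X a b ^ 2 + Y a b ^ 2 = exp a ^ 2 * (1 + cos b ^ 2) := by
      rw [hX, hY]
      linear_combination (exp a ^ 2 * (√2 ^ 2 * cos b ^ 2 + sin b ^ 2)) * ha
        + exp a ^ 2 * cos b ^ 2 * hr + exp a ^ 2 * hb
    have hN : 0 < √(X a b ^ 2 + Y a b ^ 2) := by
      rw [hnorm]; positivity
    have hval : cos (α s - a - b)
        = exp a * (√2 * cos b ^ 2 + sin b ^ 2) / √(X a b ^ 2 + Y a b ^ 2) := by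
      rw [sub_sub, cos_sub, hcos, hsin, cos_add, sin_add, div_mul_eq_mul_div,
        div_mul_eq_mul_div, ← add_div]
      congr 1
      rw [hX, hY]
      linear_combination (exp a * (√2 * cos b ^ 2 + sin b ^ 2)) * ha
    rw [hval]
    have : 0 < √2 * cos b ^ 2 + sin b ^ 2 := by
      have h1 : 1 ≤ √2 := by
        rw [one_le_sqrt]; norm_num
      nlinarith [sq_nonneg (cos b)]
    have := exp_pos a
    positivity
  have hbdd := abs_sub_lt_pi_of_cos_pos ((hα.sub htf).sub hθf).continuous hcospos 0
  -- The corrected and normalised function is nondecreasing.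
  set G : ℝ → ℝ := fun x => -(√2 / 8) * (2 * cos x ^ 2 - 1 + 2 * sin x * cos x) with hG
  have hGd : ∀ x, HasDerivAt G
      (√2 / 4 * (2 * sin x * cos x - (cos x ^ 2 - sin x ^ 2))) x := by
    intro x
    have h := (((((hasDerivAt_cos x).pow 2).const_mul 2).sub_const 1).add
      (((hasDerivAt_sin x).const_mul 2).mul (hasDerivAt_cos x))).const_mul (-(√2 / 8))
    refine h.congr_deriv ?_
    norm_num
    ring
  have hGb : ∀ x, |G x| ≤ 1 := by
    intro x
    have hr0 : 0 ≤ √2 := sqrt_nonneg 2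
    have hr2 : √2 ≤ 2 := by rw [sqrt_le_left (by norm_num)]; norm_num
    have hb := sin_sq_add_cos_sq x
    have h2 : |2 * cos x ^ 2 - 1 + 2 * sin x * cos x| ≤ 2 := by
      rw [abs_le]
      constructor <;> nlinarith [sq_nonneg (sin x + cos x), sq_nonneg (sin x - cos x),
        sq_nonneg (sin x), sq_nonneg (cos x)]
    have h3 : |G x| = √2 / 8 * |2 * cos x ^ 2 - 1 + 2 * sin x * cos x| := by
      rw [hG, abs_mul, abs_neg, abs_of_nonneg (by positivity)]
    rw [h3]
    nlinarith [abs_nonneg (2 * cos x ^ 2 - 1 + 2 * sin x * cos x)]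
  have hmono : Monotone fun s => tf s + θf s + G (θf s) - 1 / 50 * tf s := by
    have hd : ∀ s, HasDerivAt (fun s => tf s + θf s + G (θf s) - 1 / 50 * tf s)
        (deriv tf s + deriv θf s + (√2 / 4 * (2 * sin (θf s) * cos (θf s)
          - (cos (θf s) ^ 2 - sin (θf s) ^ 2))) * deriv θf s - 1 / 50 * deriv tf s) s :=
      fun s => (((htf s).hasDerivAt.add (hθf s).hasDerivAt).add
        ((hGd (θf s)).comp s (hθf s).hasDerivAt)).sub ((htf s).hasDerivAt.const_mul _)
    refine monotone_of_deriv_nonneg (fun s => (hd s).differentiableAt) fun s => ?_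
    rw [(hd s).deriv]
    have hk := corrector_ineq (cos (θf s)) (sin (θf s)) (cos_sq_add_sin_sq _)
    have hs : 0 < 1 + sin (θf s) ^ 2 := by positivity
    have hm := mul_le_mul_of_nonneg_left hk (ht' s).le
    -- Clear the denominator `1 + sin² θ` of `dθ/dt`.
    refine nonneg_of_mul_nonneg_left ?_ hs
    set g := √2 / 4 * (2 * sin (θf s) * cos (θf s) - (cos (θf s) ^ 2 - sin (θf s) ^ 2))
    linear_combination hm - (1 + g) * hrel s
  obtain ⟨C, hC⟩ : ∃ C, C = α 0 - 1 / 50 * tf 0 := ⟨_, rfl⟩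
  constructor
  · refine tendsto_atBot_mono' _ ?_ (tendsto_atBot_add_const_right _ (C + π + 2)
      (htBot.const_mul_atBot (by norm_num : (0 : ℝ) < 1 / 50)))
    filter_upwards [eventually_le_atBot 0] with s hs
    have h1 := hmono hs
    have h2 := abs_lt.mp (hbdd s)
    have h3 := abs_le.mp (hGb (θf s))
    have h4 := abs_le.mp (hGb (θf 0))
    simp only [Pi.sub_apply] at h1 h2
    linarith [h2.1, h2.2, h3.1, h3.2, h4.1, h4.2]
  · refine tendsto_atTop_mono' _ ?_ (tendsto_atTop_add_const_right _ (C - π - 2)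
      (htTop.const_mul_atTop (by norm_num : (0 : ℝ) < 1 / 50)))
    filter_upwards [eventually_ge_atTop 0] with s hs
    have h1 := hmono hs
    have h2 := abs_lt.mp (hbdd s)
    have h3 := abs_le.mp (hGb (θf s))
    have h4 := abs_le.mp (hGb (θf 0))
    simp only [Pi.sub_apply] at h1 h2
    linarith [h2.1, h2.2, h3.1, h3.2, h4.1, h4.2]
end
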